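/- arXiv:1611.09135 — 3 statements merged into one kernel-verified Lean document; each statement's English description precedes it below -/
import Mathlib

section
/- For every n ∈ ℕ with D(x^n) ≠ 0 one has deg D(x^n) ≤ n + h (an inequality of integers); moreover, there exists N ∈ ℕ such that for every n > N, D(x^n) ≠ 0 and deg D(x^n) = n + h. -/
open Polynomial

/-!
Each term `p i * (Xⁿ)⁽ⁱ⁾` of `D (Xⁿ)` has degree at most `n + deg (p i) - i ≤ n + h`, and only the
terms with `deg (p i) - i = h` reach the bound. Their contributions make the coefficient of
`X ^ (n + h)` equal to `χ(n)`, where `χ = ∑ lc(p i) • x(x - 1)⋯(x - i + 1)` over these `i`. Falling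
factorials are linearly independent, so `χ` is a nonzero polynomial and `χ(n) ≠ 0` for large `n`.
-/

section Semiring

variable {R : Type*} [Semiring R]

theorem natDegree_mul_iterate_derivative_add_le {p q : R[X]} {i : ℕ}
    (hpq : p * derivative^[i] q ≠ 0) :
    (p * derivative^[i] q).natDegree + i ≤ p.natDegree + q.natDegree := by
  have hi : i ≤ q.natDegree := by
    by_contra! hlt
    exact hpq (by rw [iterate_derivative_eq_zero hlt, mul_zero])
  have hmul : (p * derivative^[i] q).natDegree ≤ p.natDegree + (derivative^[i] q).natDegree :=
    natDegree_mul_le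
  have hder : (derivative^[i] q).natDegree ≤ q.natDegree - i := natDegree_iterate_derivative q i
  omega

end Semiring

section DifferentialOperator

variable {R : Type*} [CommSemiring R]

theorem coeff_mul_iterate_derivative_X_pow (p : R[X]) {i k m n : ℕ} (hmk : m + i = k + n) :
    (p * derivative^[i] (X ^ n)).coeff m = n.descFactorial i * p.coeff k := by
  rw [iterate_derivative_X_pow_eq_smul, mul_smul_comm, coeff_smul, smul_eq_mul]
  rcases lt_or_ge n i with hni | hin
  · simp only [Nat.descFactorial_of_lt hni, Nat.cast_zero, zero_mul]
  · rw [show m = k + (n - i) by omega, coeff_mul_X_pow]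

/-- The linear differential operator `q ↦ ∑ i ∈ s, p i * q⁽ⁱ⁾` with polynomial coefficients `p i`,
bundled as a linear map; `s` is the set of orders of derivatives that may occur. -/
noncomputable def differentialOperator (s : Finset ℕ) (p : ℕ → R[X]) : R[X] →ₗ[R] R[X] :=
  ∑ i ∈ s, LinearMap.mulLeft R (p i) ∘ₗ derivative ^ i

theorem differentialOperator_apply (s : Finset ℕ) (p : ℕ → R[X]) (q : R[X]) :
    differentialOperator s p q = ∑ i ∈ s, p i * derivative^[i] q := by
  simp [differentialOperator, Module.End.pow_apply]

theorem natDegree_differentialOperator_le {s : Finset ℕ} {p : ℕ → R[X]} {h : ℤ}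
    (hp : ∀ i ∈ s, p i ≠ 0 → ((p i).natDegree : ℤ) - i ≤ h) {q : R[X]}
    (hq : differentialOperator s p q ≠ 0) :
    ((differentialOperator s p q).natDegree : ℤ) ≤ q.natDegree + h := by
  have hlead := leadingCoeff_ne_zero.mpr hq
  rw [leadingCoeff] at hlead
  generalize (differentialOperator s p q).natDegree = m at hlead ⊢
  rw [differentialOperator_apply, finsetSum_coeff] at hlead
  obtain ⟨i, hi, hcoeff⟩ := Finset.exists_ne_zero_of_sum_ne_zero hlead
  have hterm : p i * derivative^[i] q ≠ 0 := fun h0 ↦ hcoeff (by rw [h0, coeff_zero])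
  have hm : m ≤ (p i * derivative^[i] q).natDegree := le_natDegree_of_ne_zero hcoeff
  have hdeg := natDegree_mul_iterate_derivative_add_le hterm
  have hbound := hp i hi (left_ne_zero_of_mul hterm)
  omega

end DifferentialOperator

theorem linearIndependent_descPochhammer {R : Type*} [Ring R] [IsDomain R] :
    LinearIndependent R (descPochhammer R) :=
  (Polynomial.Sequence.mk (descPochhammer R) fun i ↦ by
    rw [degree_eq_natDegree (monic_descPochhammer R i).ne_zero,
      descPochhammer_natDegree]).linearIndependent

section IndicialPolynomial

variable {R : Type*} [CommRing R]

/-- The indicial polynomial at infinity of `∑ i ∈ s, p i * (d/dx)ⁱ`: when `h` is an upper bound for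
the differences `deg (p i) - i` with `p i ≠ 0`, its value at `n` is the coefficient of `X ^ (n + h)`
in the image of `X ^ n`. An index with `p i = 0` may pass the filter, since `natDegree 0 = 0`, but
contributes `0`. -/
noncomputable def indicialPolynomial (s : Finset ℕ) (p : ℕ → R[X]) (h : ℤ) : R[X] :=
  ∑ i ∈ s with ((p i).natDegree : ℤ) - i = h, (p i).leadingCoeff • descPochhammer R i

theorem coeff_differentialOperator_X_pow {s : Finset ℕ} {p : ℕ → R[X]} {h : ℤ}
    (hp : ∀ i ∈ s, p i ≠ 0 → ((p i).natDegree : ℤ) - i ≤ h) {n m : ℕ} (hm : (m : ℤ) = n + h) :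
    (differentialOperator s p (X ^ n)).coeff m = (indicialPolynomial s p h).eval (n : R) := by
  simp only [differentialOperator_apply, indicialPolynomial, finsetSum_coeff, eval_finsetSum,
    eval_smul, smul_eq_mul, descPochhammer_eval_eq_descFactorial]
  rw [Finset.sum_filter]
  refine Finset.sum_congr rfl fun i hi ↦ ?_
  rcases eq_or_ne (p i) 0 with hpi | hpi
  · simp [hpi]
  have hbound := hp i hi hpi
  obtain ⟨k, hk⟩ := Int.eq_ofNat_of_zero_le (show 0 ≤ h + i by omega)
  rw [coeff_mul_iterate_derivative_X_pow (p i) (show m + i = k + n by omega), mul_comm]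
  split_ifs with hdeg
  · rw [leadingCoeff, show (p i).natDegree = k by omega]
  · rw [coeff_eq_zero_of_natDegree_lt (by omega), zero_mul]

variable [IsDomain R]

theorem indicialPolynomial_ne_zero {s : Finset ℕ} {p : ℕ → R[X]} {h : ℤ}
    (hp : ∃ i ∈ s, p i ≠ 0 ∧ h = ((p i).natDegree : ℤ) - i) : indicialPolynomial s p h ≠ 0 := by
  obtain ⟨i, hi, hpi, rfl⟩ := hp
  intro hzero
  exact hpi <| leadingCoeff_eq_zero.mp <|
    linearIndependent_iff'.mp linearIndependent_descPochhammer _ _ hzero i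
      (Finset.mem_filter.mpr ⟨hi, rfl⟩)

theorem eventually_eval_natCast_ne_zero [CharZero R] {q : R[X]} (hq : q ≠ 0) :
    ∀ᶠ n : ℕ in Filter.atTop, q.eval (n : R) ≠ 0 := by
  rw [← Nat.cofinite_eq_atTop]
  exact Nat.cast_injective.tendsto_cofinite.eventually
    (finite_setOfPred_isRoot hq).compl_mem_cofinite

theorem eventually_natDegree_differentialOperator_X_pow [CharZero R] {s : Finset ℕ} {p : ℕ → R[X]}
    {h : ℤ} (hh : IsGreatest {z : ℤ | ∃ i ∈ s, p i ≠ 0 ∧ z = ((p i).natDegree : ℤ) - i} h) :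
    ∀ᶠ n : ℕ in Filter.atTop, differentialOperator s p (X ^ n) ≠ 0 ∧
      ((differentialOperator s p (X ^ n)).natDegree : ℤ) = n + h := by
  have hp : ∀ i ∈ s, p i ≠ 0 → ((p i).natDegree : ℤ) - i ≤ h :=
    fun i hi hpi ↦ hh.2 ⟨i, hi, hpi, rfl⟩
  filter_upwards [eventually_eval_natCast_ne_zero (indicialPolynomial_ne_zero hh.1),
    Filter.eventually_ge_atTop h.natAbs] with n hn hhn
  obtain ⟨m, hm⟩ := Int.eq_ofNat_of_zero_le (show 0 ≤ n + h by omega)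
  have hcoeff : (differentialOperator s p (X ^ n)).coeff m ≠ 0 := by
    rwa [coeff_differentialOperator_X_pow hp hm.symm]
  have hne : differentialOperator s p (X ^ n) ≠ 0 := fun h0 ↦ hcoeff (by rw [h0, coeff_zero])
  have hle := natDegree_differentialOperator_le hp hne
  have hge : m ≤ (differentialOperator s p (X ^ n)).natDegree := le_natDegree_of_ne_zero hcoeff
  rw [natDegree_X_pow] at hle
  exact ⟨hne, by omega⟩

theorem stmt_8_general [CharZero R] {s : Finset ℕ} {p : ℕ → R[X]} {h : ℤ}
    (hh : IsGreatest {z : ℤ | ∃ i ∈ s, p i ≠ 0 ∧ z = ((p i).natDegree : ℤ) - i} h) :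
    (∀ n : ℕ, differentialOperator s p (X ^ n) ≠ 0 →
      ((differentialOperator s p (X ^ n)).natDegree : ℤ) ≤ n + h) ∧
    ∃ N : ℕ, ∀ n : ℕ, N < n → differentialOperator s p (X ^ n) ≠ 0 ∧
      ((differentialOperator s p (X ^ n)).natDegree : ℤ) = n + h := by
  refine ⟨fun n hn ↦ ?_, ?_⟩
  · simpa only [natDegree_X_pow] using
      natDegree_differentialOperator_le (fun i hi hpi ↦ hh.2 ⟨i, hi, hpi, rfl⟩) hn
  · obtain ⟨N, hN⟩ :=
      Filter.eventually_atTop.mp (eventually_natDegree_differentialOperator_X_pow hh)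
    exact ⟨N, fun n hn ↦ hN n hn.le⟩

end IndicialPolynomial

/-- Let `D q = ∑_{i ≤ ν} p i * q⁽ⁱ⁾` be a linear differential operator
with polynomial coefficients, not all zero, and let `h = max {deg (p i) - i : p i ≠ 0}`
be its height. For every `n` with `D (Xⁿ) ≠ 0` one has `deg D (Xⁿ) ≤ n + h` (as
integers); moreover there exists `N : ℕ` such that for every `n > N`, `D (Xⁿ) ≠ 0` and
`deg D (Xⁿ) = n + h`. -/
theorem stmt_8 (ν : ℕ) (p : ℕ → Polynomial ℝ) (hp : ∃ i ≤ ν, p i ≠ 0)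
    (D : Polynomial ℝ →ₗ[ℝ] Polynomial ℝ)
    (hD : ∀ q, D q = ∑ i ∈ Finset.range (ν + 1), p i * (Polynomial.derivative^[i] q))
    (h : ℤ)
    (hh : IsGreatest {z : ℤ | ∃ i ≤ ν, p i ≠ 0 ∧ z = ((p i).natDegree : ℤ) - i} h) :
    (∀ n : ℕ, D (X ^ n) ≠ 0 → ((D (X ^ n)).natDegree : ℤ) ≤ n + h) ∧
    ∃ N : ℕ, ∀ n : ℕ, N < n → D (X ^ n) ≠ 0 ∧ ((D (X ^ n)).natDegree : ℤ) = n + h := by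
  obtain rfl : D = differentialOperator (Finset.range (ν + 1)) p :=
    LinearMap.ext fun q ↦ (hD q).trans (differentialOperator_apply _ p q).symm
  exact stmt_8_general (by simpa only [Finset.mem_range_succ_iff] using hh)
end

section
/- The family d = (d_n)_{n∈ℕ} of polynomials defined by d_n = x^n if n ≤ N + h and d_n = D(x^{n−h}) if n > N + h (note that n − h > N ≥ 0 when n > N + h, so this is well defined) is a basis of ℝ[x]: it is linearly independent and spans ℝ[x]. -/
open Polynomial

theorem linearIndependent_and_span_eq_top_of_degree_eq {K : Type*} [DivisionRing K]
    {d : ℕ → K[X]} (hdeg : ∀ n, (d n).degree = n) :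
    LinearIndependent K d ∧ Submodule.span K (Set.range d) = ⊤ := by
  let S : Polynomial.Sequence K := ⟨d, hdeg⟩
  have hunit (n : ℕ) : IsUnit (S n).leadingCoeff :=
    (leadingCoeff_ne_zero.mpr (S.ne_zero n)).isUnit
  exact ⟨S.linearIndependent, S.span hunit⟩

theorem degree_eq_of_eq_X_pow_of_eq_shift {R : Type*} [Semiring R] [Nontrivial R]
    {f d : ℕ → R[X]} {h : ℤ} {N : ℕ}
    (hf : ∀ n, N < n → f n ≠ 0 ∧ ((f n).natDegree : ℤ) = n + h)
    (hlow : ∀ n : ℕ, (n : ℤ) ≤ N + h → d n = X ^ n)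
    (hhigh : ∀ n : ℕ, (N : ℤ) + h < n → d n = f ((n : ℤ) - h).toNat) (n : ℕ) :
    (d n).degree = n := by
  rcases le_or_gt (n : ℤ) (N + h) with hn | hn
  · rw [hlow n hn, degree_X_pow]
  · have hlt : N < ((n : ℤ) - h).toNat := by lia
    obtain ⟨hne, hnat⟩ := hf _ hlt
    have hdeg : (f ((n : ℤ) - h).toNat).natDegree = n := by lia
    rw [hhigh n hn, degree_eq_natDegree hne, hdeg]

theorem stmt_9_general {K : Type*} [DivisionRing K] (D : K[X] → K[X]) (h : ℤ) (N : ℕ)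
    (hN : ∀ n : ℕ, N < n → D (X ^ n) ≠ 0 ∧ ((D (X ^ n)).natDegree : ℤ) = n + h)
    (d : ℕ → K[X])
    (hd1 : ∀ n : ℕ, (n : ℤ) ≤ N + h → d n = X ^ n)
    (hd2 : ∀ n : ℕ, (N : ℤ) + h < n → d n = D (X ^ ((n : ℤ) - h).toNat)) :
    LinearIndependent K d ∧ Submodule.span K (Set.range d) = ⊤ :=
  linearIndependent_and_span_eq_top_of_degree_eq <|
    degree_eq_of_eq_X_pow_of_eq_shift (f := fun n ↦ D (X ^ n)) hN hd1 hd2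

/-- With `N` such that `D (Xⁿ) ≠ 0` and `deg D (Xⁿ) = n + h` for all
`n > N`, the family `d = (d n)` defined by `d n = Xⁿ` if `n ≤ N + h` and
`d n = D (X^(n-h))` if `n > N + h` (well defined since `n - h > N ≥ 0` there) is a basis
of `ℝ[x]`: linearly independent and spanning. -/
theorem stmt_9 (ν : ℕ) (p : ℕ → Polynomial ℝ) (hp : ∃ i ≤ ν, p i ≠ 0)
    (D : Polynomial ℝ →ₗ[ℝ] Polynomial ℝ)
    (hD : ∀ q, D q = ∑ i ∈ Finset.range (ν + 1), p i * (Polynomial.derivative^[i] q))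
    (h : ℤ)
    (hh : IsGreatest {z : ℤ | ∃ i ≤ ν, p i ≠ 0 ∧ z = ((p i).natDegree : ℤ) - i} h)
    (N : ℕ)
    (hN : ∀ n : ℕ, N < n → D (X ^ n) ≠ 0 ∧ ((D (X ^ n)).natDegree : ℤ) = n + h)
    (d : ℕ → Polynomial ℝ)
    (hd1 : ∀ n : ℕ, (n : ℤ) ≤ N + h → d n = X ^ n)
    (hd2 : ∀ n : ℕ, (N : ℤ) + h < n → d n = D (X ^ ((n : ℤ) - h).toNat)) :
    LinearIndependent ℝ d ∧ Submodule.span ℝ (Set.range d) = ⊤ :=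
  stmt_9_general D h N hN d hd1 hd2
end

section
/- Let S₁ = { s ∈ ℕ : s ≤ N + h (as integers) and deg(Dq) ≠ s for every q ∈ span{x^n : 0 ≤ n ≤ N} with Dq ≠ 0 } be the set of inaccessible degrees associated with the restriction D₁ of D to span{x^n : 0 ≤ n ≤ N}. Then S = S₁, and hence the residual spaces coincide: span{x^s : s ∈ S} = span{x^s : s ∈ S₁}. -/
open Polynomial

/-!
A differential operator `D` of height `h` raises degrees by at most `h`. If it raises the degree of
`X ^ n` by exactly `h` for every `n > N`, then the top term of a polynomial `q` of degree greater
than `N` cannot cancel in `D q`, so `deg (D q) = deg q + h > N + h`. Hence every degree above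
`N + h` is attained, on a monomial, and the degrees up to `N + h` can only be attained on
`span {X ^ n : n ≤ N}`.
-/

section

variable {R : Type*} [Semiring R]

/-- The inaccessible degrees of a linear map `f` into a polynomial ring: the natural numbers that
are not the degree of a nonzero value of `f`. The domain is an arbitrary module, so that this also
applies to the restriction of an operator to a subspace. -/
def inaccessibleDegrees {M : Type*} [AddCommMonoid M] [Module R M] (f : M →ₗ[R] R[X]) : Set ℕ :=
  {s | ∀ q, f q ≠ 0 → (f q).natDegree ≠ s}

lemma natDegree_sum_mul_iterate_derivative_le {ν : ℕ} {p : ℕ → R[X]} {h : ℤ}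
    (hp : ∀ i ≤ ν, p i ≠ 0 → ((p i).natDegree : ℤ) - i ≤ h) {q : R[X]}
    (hq : ∑ i ∈ Finset.range (ν + 1), p i * derivative^[i] q ≠ 0) :
    ((∑ i ∈ Finset.range (ν + 1), p i * derivative^[i] q).natDegree : ℤ) ≤ q.natDegree + h := by
  set r := ∑ i ∈ Finset.range (ν + 1), p i * derivative^[i] q with hr
  obtain ⟨i, hi, hcoeff⟩ : ∃ i ∈ Finset.range (ν + 1),
      (p i * derivative^[i] q).coeff r.natDegree ≠ 0 := by
    apply Finset.exists_ne_zero_of_sum_ne_zero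
    rw [← finsetSum_coeff, ← hr]
    exact leadingCoeff_ne_zero.mpr hq
  have hpi : p i ≠ 0 := fun h0 ↦ hcoeff (by rw [h0, zero_mul, coeff_zero])
  have hiq : i ≤ q.natDegree := by
    by_contra! hlt
    exact hcoeff (by rw [iterate_derivative_eq_zero hlt, mul_zero, coeff_zero])
  have hterm : r.natDegree ≤ (p i).natDegree + (q.natDegree - i) :=
    (le_natDegree_of_ne_zero hcoeff).trans <|
      natDegree_mul_le_of_le le_rfl (natDegree_iterate_derivative q i)
  have hheight := hp i (Finset.mem_range_succ_iff.mp hi) hpi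
  omega

lemma mem_span_X_pow_of_natDegree_le {q : R[X]} {N : ℕ} (hq : q.natDegree ≤ N) :
    q ∈ Submodule.span R {r : R[X] | ∃ n ≤ N, r = X ^ n} := by
  classical
  have hmem : q ∈ degreeLE R N := mem_degreeLE.mpr (degree_le_of_natDegree_le hq)
  rw [degreeLE_eq_span_X_pow] at hmem
  simpa [Set.image, Nat.lt_succ_iff, eq_comm] using hmem

variable [NoZeroDivisors R] {D : R[X] →ₗ[R] R[X]} {h : ℤ}

lemma degree_map_eq_degree_map_X_pow_natDegree
    (hD : ∀ q, D q ≠ 0 → ((D q).natDegree : ℤ) ≤ q.natDegree + h) {q : R[X]} (hq : q ≠ 0)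
    (hne : D (X ^ q.natDegree) ≠ 0)
    (hdeg : ((D (X ^ q.natDegree)).natDegree : ℤ) = q.natDegree + h) :
    (D q).degree = (D (X ^ q.natDegree)).degree := by
  have hsplit : D q = D q.eraseLead + C q.leadingCoeff * D (X ^ q.natDegree) := by
    rw [← smul_eq_C_mul, ← map_smul, ← map_add, smul_eq_C_mul, eraseLead_add_C_mul_X_pow]
  have hlead : (C q.leadingCoeff * D (X ^ q.natDegree)).degree = (D (X ^ q.natDegree)).degree :=
    degree_C_mul (leadingCoeff_ne_zero.mpr hq)
  have hlower : (D q.eraseLead).degree < (D (X ^ q.natDegree)).degree := by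
    rcases eq_or_ne (D q.eraseLead) 0 with h0 | h0
    · rwa [h0, degree_zero, bot_lt_iff_ne_bot, degree_ne_bot]
    · have herase : q.eraseLead.natDegree < q.natDegree :=
        q.eraseLead_natDegree_lt_or_eraseLead_eq_zero.resolve_right
          fun hz ↦ h0 (by rw [hz, map_zero])
      have hDerase := hD q.eraseLead h0
      exact degree_lt_degree (by omega)
  rw [hsplit, degree_add_eq_right_of_degree_lt (hlower.trans_eq hlead.symm), hlead]

theorem stmt_12_general {N : ℕ}
    (hD : ∀ q, D q ≠ 0 → ((D q).natDegree : ℤ) ≤ q.natDegree + h)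
    (hN : ∀ n : ℕ, N < n → D (X ^ n) ≠ 0 ∧ ((D (X ^ n)).natDegree : ℤ) = n + h) :
    inaccessibleDegrees D = {s : ℕ | (s : ℤ) ≤ N + h} ∩
      inaccessibleDegrees (D.domRestrict (Submodule.span R {r : R[X] | ∃ n ≤ N, r = X ^ n})) := by
  ext s
  constructor
  · refine fun hs ↦ ⟨show (s : ℤ) ≤ N + h from ?_, fun q ↦ hs q⟩
    by_contra! hlt
    obtain ⟨n, hn⟩ := Int.eq_ofNat_of_zero_le (show 0 ≤ (s : ℤ) - h by omega)
    obtain ⟨hne, hdeg⟩ := hN n (by omega)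
    exact hs _ hne (by omega)
  · rintro ⟨hle : (s : ℤ) ≤ N + h, hs⟩ q hDq hqs
    have hqN : q.natDegree ≤ N := by
      by_contra! hlt
      obtain ⟨hne, hdeg⟩ := hN _ hlt
      have htop := natDegree_eq_of_degree_eq <|
        degree_map_eq_degree_map_X_pow_natDegree hD (ne_zero_of_natDegree_gt hlt) hne hdeg
      omega
    exact hs ⟨q, mem_span_X_pow_of_natDegree_le hqN⟩ hDq hqs

end

/-- Let `S₁` be the set of inaccessible degrees of the restriction
`D₁` of `D` to `span {Xⁿ : 0 ≤ n ≤ N}`, i.e. the `s ≤ N + h` such that no `q` in that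
span with `D q ≠ 0` has `deg (D q) = s`. Then `S = S₁`, and hence the residual spaces
coincide: `span {Xˢ : s ∈ S} = span {Xˢ : s ∈ S₁}`. -/
theorem stmt_12 (ν : ℕ) (p : ℕ → Polynomial ℝ) (hp : ∃ i ≤ ν, p i ≠ 0)
    (D : Polynomial ℝ →ₗ[ℝ] Polynomial ℝ)
    (hD : ∀ q, D q = ∑ i ∈ Finset.range (ν + 1), p i * (Polynomial.derivative^[i] q))
    (h : ℤ)
    (hh : IsGreatest {z : ℤ | ∃ i ≤ ν, p i ≠ 0 ∧ z = ((p i).natDegree : ℤ) - i} h)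
    (N : ℕ)
    (hN : ∀ n : ℕ, N < n → D (X ^ n) ≠ 0 ∧ ((D (X ^ n)).natDegree : ℤ) = n + h)
    (S : Set ℕ)
    (hS : S = {s : ℕ | ∀ q : Polynomial ℝ, D q ≠ 0 → (D q).natDegree ≠ s})
    (S₁ : Set ℕ)
    (hS₁ : S₁ = {s : ℕ | (s : ℤ) ≤ N + h ∧
      ∀ q ∈ Submodule.span ℝ {r : Polynomial ℝ | ∃ n ≤ N, r = X ^ n},
        D q ≠ 0 → (D q).natDegree ≠ s}) :
    S = S₁ ∧
    Submodule.span ℝ {r : Polynomial ℝ | ∃ s ∈ S, r = X ^ s} =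
      Submodule.span ℝ {r : Polynomial ℝ | ∃ s ∈ S₁, r = X ^ s} := by
  have hheight (q : ℝ[X]) (hq : D q ≠ 0) : ((D q).natDegree : ℤ) ≤ q.natDegree + h := by
    rw [hD] at hq ⊢
    exact natDegree_sum_mul_iterate_derivative_le (fun i hi hpi ↦ hh.2 ⟨i, hi, hpi, rfl⟩) hq
  have hSS₁ : S = S₁ := by
    simpa [hS, hS₁, inaccessibleDegrees, Set.ext_iff] using stmt_12_general hheight hN
  exact ⟨hSS₁, by rw [hSS₁]⟩
end
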